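/- For all integers ℓ, r, c, a the following identity holds in F = ℚ(q)(x): q^{r−2a}·[2ℓ−r]·(q^{2−2r}x − 1)/(q^{4c−2r+2}x − 1) + q^{2ℓ−a}·[a] + q^{2c+r−2ℓ−a}·[r−2c−a]·(q^{2−2r}x − 1)/(q^{4c−2r+2}x − 1) + q^{2c−2ℓ}·[2c]·(q^{−2a}x − 1)/(q^{4c−2r+2}x − 1) + q^{1−r−2a}·[2ℓ−r+1]·(q^{4c} − 1)·x/(q^{4c−2r+2}x − 1) = [2ℓ]. -/

import Mathlib

noncomputable section

abbrev Kq : Type := RatFunc ℚ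

/-- The field `F = ℚ(q)(x)` of rational functions in two variables `q, x`. -/
abbrev Fq : Type := RatFunc Kq

/-- The variable `q` in `F = ℚ(q)(x)`. -/
def qF : Fq := RatFunc.C RatFunc.X

/-- The variable `x` in `F = ℚ(q)(x)` (playing the role of `K⁻²`). -/
def xF : Fq := RatFunc.X

/-- The quantum integer `[n] = (q^n - q^{-n})/(q - q^{-1})` in `F`. -/
def qintF (n : ℤ) : Fq := (qF ^ n - qF ^ (-n)) / (qF - qF⁻¹)

theorem qF_ne : qF ≠ 0 := by
  unfold qF
  exact (map_ne_zero _).2 RatFunc.X_ne_zero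

theorem den_ne (m : ℤ) : qF ^ m * xF - 1 ≠ 0 := by
  intro h
  have h1 : qF ^ m * xF = 1 := sub_eq_zero.1 h
  unfold qF xF at h1
  rw [← map_zpow₀, ← RatFunc.algebraMap_C, ← RatFunc.algebraMap_X (K := Kq), ← map_mul,
    ← map_one (algebraMap (Polynomial Kq) (RatFunc Kq))] at h1
  have h2 := RatFunc.algebraMap_injective Kq h1
  have h3 := congrArg (Polynomial.eval 0) h2
  simp at h3

theorem aux {F : Type*} [Field F] (q x e : F) (hq : q ≠ 0) (ℓ r c a : ℤ)
    (hD : q ^ (4 * c - 2 * r + 2) * x - 1 ≠ 0) :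
    q ^ (r - 2 * a) * ((q ^ (2 * ℓ - r) - q ^ (-(2 * ℓ - r))) / e) *
        ((q ^ (2 - 2 * r) * x - 1) / (q ^ (4 * c - 2 * r + 2) * x - 1))
      + q ^ (2 * ℓ - a) * ((q ^ a - q ^ (-a)) / e)
      + q ^ (2 * c + r - 2 * ℓ - a) * ((q ^ (r - 2 * c - a) - q ^ (-(r - 2 * c - a))) / e) *
          ((q ^ (2 - 2 * r) * x - 1) / (q ^ (4 * c - 2 * r + 2) * x - 1))
      + q ^ (2 * c - 2 * ℓ) * ((q ^ (2 * c) - q ^ (-(2 * c))) / e) *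
          ((q ^ (-2 * a) * x - 1) / (q ^ (4 * c - 2 * r + 2) * x - 1))
      + q ^ (1 - r - 2 * a) * ((q ^ (2 * ℓ - r + 1) - q ^ (-(2 * ℓ - r + 1))) / e) *
          ((q ^ (4 * c) - 1) * x / (q ^ (4 * c - 2 * r + 2) * x - 1))
    = (q ^ (2 * ℓ) - q ^ (-(2 * ℓ))) / e := by
  have key : q ^ (r - 2 * a) * (q ^ (2 * ℓ - r) - q ^ (-(2 * ℓ - r))) * (q ^ (2 - 2 * r) * x - 1)
      + q ^ (2 * ℓ - a) * (q ^ a - q ^ (-a)) * (q ^ (4 * c - 2 * r + 2) * x - 1)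
      + q ^ (2 * c + r - 2 * ℓ - a) * (q ^ (r - 2 * c - a) - q ^ (-(r - 2 * c - a))) *
          (q ^ (2 - 2 * r) * x - 1)
      + q ^ (2 * c - 2 * ℓ) * (q ^ (2 * c) - q ^ (-(2 * c))) * (q ^ (-2 * a) * x - 1)
      + q ^ (1 - r - 2 * a) * (q ^ (2 * ℓ - r + 1) - q ^ (-(2 * ℓ - r + 1))) *
          ((q ^ (4 * c) - 1) * x)
    = (q ^ (2 * ℓ) - q ^ (-(2 * ℓ))) * (q ^ (4 * c - 2 * r + 2) * x - 1) := by
    clear hD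
    have e2 : ∀ n : ℤ, q ^ (2 * n) = (q ^ n) ^ 2 := fun n => by
      rw [mul_comm, zpow_mul]; exact zpow_ofNat _ _
    have e4 : ∀ n : ℤ, q ^ (4 * n) = (q ^ n) ^ 4 := fun n => by
      rw [mul_comm, zpow_mul]; exact zpow_ofNat _ _
    have hl := zpow_ne_zero ℓ hq
    have hr := zpow_ne_zero r hq
    have hc := zpow_ne_zero c hq
    have ha := zpow_ne_zero a hq
    have z2 : q ^ (2 : ℤ) = q ^ 2 := zpow_ofNat _ _
    simp only [neg_mul, zpow_neg, zpow_add₀ hq, zpow_sub₀ hq, e2, e4, zpow_one, z2]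
    generalize q ^ ℓ = L at *
    generalize q ^ r = R at *
    generalize q ^ c = C at *
    generalize q ^ a = A at *
    field_simp
    ring
  generalize q ^ (4 * c - 2 * r + 2) * x - 1 = D at *
  rw [← mul_div_cancel_right₀ (q ^ (2 * ℓ) - q ^ (-(2 * ℓ))) hD, ← key]
  simp only [div_eq_mul_inv]
  linear_combination (-(q ^ (2 * ℓ - a) * (q ^ a - q ^ (-a)) * e⁻¹)) * (mul_inv_cancel₀ hD)

/-- Identity (4.9). -/
theorem identity_K3 (ℓ r c a : ℤ) :
    qF ^ (r - 2 * a) * qintF (2 * ℓ - r) *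
        ((qF ^ (2 - 2 * r) * xF - 1) / (qF ^ (4 * c - 2 * r + 2) * xF - 1))
      + qF ^ (2 * ℓ - a) * qintF a
      + qF ^ (2 * c + r - 2 * ℓ - a) * qintF (r - 2 * c - a) *
          ((qF ^ (2 - 2 * r) * xF - 1) / (qF ^ (4 * c - 2 * r + 2) * xF - 1))
      + qF ^ (2 * c - 2 * ℓ) * qintF (2 * c) *
          ((qF ^ (-2 * a) * xF - 1) / (qF ^ (4 * c - 2 * r + 2) * xF - 1))
      + qF ^ (1 - r - 2 * a) * qintF (2 * ℓ - r + 1) *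
          ((qF ^ (4 * c) - 1) * xF / (qF ^ (4 * c - 2 * r + 2) * xF - 1))
    = qintF (2 * ℓ) := by
  exact aux qF xF (qF - qF⁻¹) qF_ne ℓ r c a (den_ne _)
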